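/- For a symplectic alternating algebra L over a field 𝔽 and every m with 2 ≤ m ≤ 4, the m-th term of the lower central series does not have dimension 2: dim L^m ≠ 2. -/

import Mathlib

/-!
The expression `(u·v, w)` is an alternating trilinear form, so `x ⟂ L^{n+1}` implies `x·y ⟂ L^n`
for all `y` (`perp_mul`).

Suppose `dim L^{m+1} = 2`. Then `(L^{m+1})^⊥` has codimension two, say
`L = (L^{m+1})^⊥ + ⟨a, b⟩` (`exists_pair`). Consequently every product `x·y` lies in
`⟨a·b⟩ + (L^m)^⊥` (`mul_decomp`), and `(w·x, y) = (x·y, w)` for `w ∈ L^m` is a multiple of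
`(a·b, w)`. So if `a·b ⟂ L^m`, then `L^{m+1} = 0` (`lcs_eq_bot`), a contradiction.

It remains to see `a·b ⟂ L^m` for `m = 1, 2, 3`.
* `m = 1`: `(a·b, w)` only depends on `w` modulo `(L²)^⊥`, and it vanishes for `w = a` and `w = b`.
* `m = 2`: `L²` is contained in `⟨a·b⟩ + (L²)^⊥`, and `(a·b, a·b) = 0`.
* `m = 3`: `(a·b, w·e)` with `w ∈ L² ⊆ ⟨a·b⟩ + (L³)^⊥`. If `w ⟂ L³` then `w·e ⟂ L²`;
  if `w = a·b`, the alternating trilinear form has a repeated argument.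
-/

variable {𝔽 : Type*} [Field 𝔽] {L : Type*} [AddCommGroup L] [Module 𝔽 L]

structure SymplecticAlternatingAlgebra (𝔽 L : Type*) [Field 𝔽] [AddCommGroup L]
    [Module 𝔽 L] where
  form : L →ₗ[𝔽] L →ₗ[𝔽] 𝔽
  mul : L →ₗ[𝔽] L →ₗ[𝔽] L
  form_alt : ∀ x, form x x = 0
  form_nondeg : ∀ x, (∀ y, form x y = 0) → x = 0
  mul_alt : ∀ x, mul x x = 0
  compat : ∀ u v w, form (mul u v) w = form (mul v w) u

namespace SymplecticAlternatingAlgebra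

variable (S : SymplecticAlternatingAlgebra 𝔽 L)

/-- `U·V`, the span of all products `u·v`. -/
def prodSub (U V : Submodule 𝔽 L) : Submodule 𝔽 L := Submodule.map₂ S.mul U V

/-- An ideal: `I·L ⊆ I`. -/
def IsIdeal (I : Submodule 𝔽 L) : Prop := S.prodSub I ⊤ ≤ I

/-- Orthogonal complement with respect to the form. -/
def perp (U : Submodule 𝔽 L) : Submodule 𝔽 L where
  carrier := {x | ∀ u ∈ U, S.form x u = 0}
  add_mem' := by
    intro a b ha hb u hu
    simp [map_add, ha u hu, hb u hu]
  zero_mem' := by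
    intro u hu
    simp
  smul_mem' := by
    intro c a ha u hu
    simp [ha u hu]

/-- `lcs n = L^(n+1)`: the lower central series, `lcs 0 = L¹ = L`. -/
def lcs : ℕ → Submodule 𝔽 L
  | 0 => ⊤
  | n + 1 => S.prodSub (lcs n) ⊤

/-- `ucs n = Z_n(L)`: the upper central series. -/
def ucs : ℕ → Submodule 𝔽 L
  | 0 => ⊥
  | n + 1 => ⨅ y : L, (ucs n).comap (S.mul.flip y)

/-- The center `Z(L)`. -/
def center : Submodule 𝔽 L := ⨅ y : L, LinearMap.ker (S.mul.flip y)

/-- Nilpotency: some term of the lower central series vanishes. -/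
def IsNilpotent : Prop := ∃ n, S.lcs n = ⊥

/-- `s` generates `L` as an algebra: the smallest subspace containing `s`
and closed under the multiplication is `L` itself. -/
def Generates (s : Set L) : Prop :=
  ∀ M : Submodule 𝔽 L, s ⊆ (M : Set L) → S.prodSub M M ≤ M → M = ⊤

end SymplecticAlternatingAlgebra

open SymplecticAlternatingAlgebra Module


namespace SymplecticAlternatingAlgebra

section
variable {𝔽 : Type*} [Field 𝔽] {L : Type*} [AddCommGroup L] [Module 𝔽 L]
  (S : SymplecticAlternatingAlgebra 𝔽 L)

lemma form_swap (x y : L) : S.form x y = -S.form y x := by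
  have h := S.form_alt (x + y)
  simp only [map_add, LinearMap.add_apply, S.form_alt, zero_add, add_zero] at h
  exact eq_neg_of_add_eq_zero_right h

lemma mul_swap (x y : L) : S.mul x y = -S.mul y x := by
  have h := S.mul_alt (x + y)
  simp only [map_add, LinearMap.add_apply, S.mul_alt, zero_add, add_zero] at h
  exact eq_neg_of_add_eq_zero_right h

lemma mul_mem_lcs {n : ℕ} {w : L} (hw : w ∈ S.lcs n) (y : L) : S.mul w y ∈ S.lcs (n + 1) :=
  Submodule.apply_mem_map₂ _ hw Submodule.mem_top

lemma lcs_succ_le {n : ℕ} {M : Submodule 𝔽 L}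
    (h : ∀ w ∈ S.lcs n, ∀ y, S.mul w y ∈ M) : S.lcs (n + 1) ≤ M :=
  Submodule.map₂_le.2 fun w hw y _ => h w hw y

lemma perp_mul {n : ℕ} {x : L} (hx : x ∈ S.perp (S.lcs (n + 1))) (y : L) :
    S.mul x y ∈ S.perp (S.lcs n) := by
  intro w hw
  rw [S.compat, S.mul_swap, map_neg, LinearMap.neg_apply, S.form_swap, neg_neg]
  exact hx _ (S.mul_mem_lcs hw y)

lemma perp_mul' {n : ℕ} {x : L} (hx : x ∈ S.perp (S.lcs (n + 1))) (y : L) :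
    S.mul y x ∈ S.perp (S.lcs n) := by
  rw [S.mul_swap]
  exact neg_mem (S.perp_mul hx y)

/-- The orthogonal complement of a two-dimensional subspace has codimension at most two. The vectors
`a`, `b` represent, through the form, extensions to `L` of the coordinate functionals of a basis
of `P`. -/
lemma exists_pair [FiniteDimensional 𝔽 L] {P : Submodule 𝔽 L} (hP : Module.finrank 𝔽 P = 2) :
    ∃ a b : L, ∀ x, ∃ α β : 𝔽, x - (α • a + β • b) ∈ S.perp P := by
  have hinj : Function.Injective S.form := by
    rw [injective_iff_map_eq_zero]
    exact fun x hx => S.form_nondeg x fun y => by rw [hx, LinearMap.zero_apply]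
  have hsurj : Function.Surjective S.form :=
    (LinearMap.injective_iff_surjective_of_finrank_eq_finrank
      (Subspace.dual_finrank_eq (K := 𝔽) (V := L)).symm).1 hinj
  let e := Module.finBasisOfFinrankEq 𝔽 P hP
  have hrep : ∀ i, ∃ a, ∀ w : P, S.form a w = e.coord i w := fun i => by
    obtain ⟨f, hf⟩ := LinearMap.exists_extend (e.coord i)
    obtain ⟨a, rfl⟩ := hsurj f
    exact ⟨a, fun w => LinearMap.congr_fun hf w⟩
  obtain ⟨a, ha⟩ := hrep 0
  obtain ⟨b, hb⟩ := hrep 1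
  refine ⟨a, b, fun x => ⟨S.form x (e 0), S.form x (e 1), fun w hw => ?_⟩⟩
  have hsum := congrArg (fun v : P => S.form x v) (e.sum_repr ⟨w, hw⟩)
  simp only [Fin.sum_univ_two, Submodule.coe_add, Submodule.coe_smul, map_add, map_smul,
    smul_eq_mul] at hsum
  have h0 := ha ⟨w, hw⟩
  have h1 := hb ⟨w, hw⟩
  simp only [Module.Basis.coord_apply] at h0 h1
  simp only [map_sub, map_add, map_smul, LinearMap.sub_apply, LinearMap.add_apply,
    LinearMap.smul_apply, smul_eq_mul, h0, h1, ← hsum]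
  ring

variable {S} {a b : L} {n : ℕ}

lemma mul_decomp
    (hab : ∀ x, ∃ α β : 𝔽, x - (α • a + β • b) ∈ S.perp (S.lcs (n + 1))) (x y : L) :
    ∃ c : 𝔽, S.mul x y - c • S.mul a b ∈ S.perp (S.lcs n) := by
  obtain ⟨α, β, hx⟩ := hab x
  obtain ⟨γ, δ, hy⟩ := hab y
  refine ⟨α * δ - β * γ, ?_⟩
  convert add_mem (S.perp_mul hx y) (S.perp_mul' hy (α • a + β • b)) using 1
  simp only [map_sub, map_add, map_smul, LinearMap.sub_apply, LinearMap.add_apply,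
    LinearMap.smul_apply, S.mul_alt, S.mul_swap b a]
  module

/-- Modulo `(L^{n+1})^⊥`, the square `L²` is spanned by `a·b`. -/
lemma sq_decomp
    (hab : ∀ x, ∃ α β : 𝔽, x - (α • a + β • b) ∈ S.perp (S.lcs (n + 1))) :
    ∀ w ∈ S.lcs 1, ∃ c : 𝔽, w - c • S.mul a b ∈ S.perp (S.lcs n) := by
  have hle : S.lcs 1 ≤ Submodule.span 𝔽 {S.mul a b} ⊔ S.perp (S.lcs n) := by
    refine S.lcs_succ_le fun x _ y => ?_
    obtain ⟨c, hc⟩ := mul_decomp hab x y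
    exact Submodule.mem_sup.2
      ⟨_, Submodule.smul_mem _ c (Submodule.mem_span_singleton_self _), _, hc, by abel⟩
  intro w hw
  obtain ⟨u, hu, v, hv, rfl⟩ := Submodule.mem_sup.1 (hle hw)
  obtain ⟨c, rfl⟩ := Submodule.mem_span_singleton.1 hu
  exact ⟨c, by simpa using hv⟩

lemma lcs_eq_bot
    (hab : ∀ x, ∃ α β : 𝔽, x - (α • a + β • b) ∈ S.perp (S.lcs (n + 1)))
    (h : S.mul a b ∈ S.perp (S.lcs n)) : S.lcs (n + 1) = ⊥ := by
  refine le_bot_iff.1 (S.lcs_succ_le fun w hw x => ?_)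
  refine (Submodule.mem_bot 𝔽).2 (S.form_nondeg _ fun y => ?_)
  rw [S.compat]
  obtain ⟨c, hc⟩ := mul_decomp hab x y
  have := add_mem hc (Submodule.smul_mem _ c h)
  rw [sub_add_cancel] at this
  exact this w hw

lemma mem_perp_succ {v : L} (h : ∀ w ∈ S.lcs n, ∀ y, S.form v (S.mul w y) = 0) :
    v ∈ S.perp (S.lcs (n + 1)) := fun _ hw =>
  S.lcs_succ_le (M := LinearMap.ker (S.form v)) (fun w hw y => LinearMap.mem_ker.2 (h w hw y)) hw

lemma form_mul_left (a b : L) : S.form (S.mul a b) a = 0 := by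
  rw [← S.compat, S.mul_alt, map_zero, LinearMap.zero_apply]

lemma form_mul_right (a b : L) : S.form (S.mul a b) b = 0 := by
  rw [S.compat, S.mul_alt, map_zero, LinearMap.zero_apply]

lemma mul_mem_perp_zero
    (hab : ∀ x, ∃ α β : 𝔽, x - (α • a + β • b) ∈ S.perp (S.lcs 1)) :
    S.mul a b ∈ S.perp (S.lcs 0) := by
  intro w _
  obtain ⟨α, β, hw⟩ := hab w
  have h := hw (S.mul a b) (S.mul_mem_lcs (n := 0) Submodule.mem_top b)
  rw [S.form_swap, neg_eq_zero] at h
  simpa [map_sub, map_add, form_mul_left, form_mul_right] using h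

lemma mul_mem_perp_one
    (hab : ∀ x, ∃ α β : 𝔽, x - (α • a + β • b) ∈ S.perp (S.lcs 2)) :
    S.mul a b ∈ S.perp (S.lcs 1) := by
  intro w hw
  obtain ⟨c, hc⟩ := sq_decomp hab w hw
  have h := hc (S.mul a b) (S.mul_mem_lcs (n := 0) Submodule.mem_top b)
  rw [S.form_swap, neg_eq_zero] at h
  simpa [map_sub, S.form_alt] using h

lemma mul_mem_perp_two
    (hab : ∀ x, ∃ α β : 𝔽, x - (α • a + β • b) ∈ S.perp (S.lcs 3)) :
    S.mul a b ∈ S.perp (S.lcs 2) := by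
  refine mem_perp_succ fun w hw y => ?_
  obtain ⟨c, hc⟩ := sq_decomp hab w hw
  have h := S.perp_mul hc y (S.mul a b) (S.mul_mem_lcs (n := 0) Submodule.mem_top b)
  rw [S.form_swap, neg_eq_zero] at h
  -- `(a·b, (a·b)·y) = 0`, since the trilinear form is alternating
  have h' : S.form (S.mul a b) (S.mul (S.mul a b) y) = 0 := by
    rw [S.form_swap, form_mul_left, neg_zero]
  simpa [map_sub, h'] using h

end

end SymplecticAlternatingAlgebra

theorem lcs_finrank_ne_two [FiniteDimensional 𝔽 L]
    (S : SymplecticAlternatingAlgebra 𝔽 L) :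
    ∀ m : ℕ, 2 ≤ m → m ≤ 4 → Module.finrank 𝔽 (S.lcs (m - 1)) ≠ 2 := by
  intro m h2 h4 hdim
  obtain ⟨a, b, hab⟩ := S.exists_pair hdim
  have hbot : S.lcs (m - 1) = ⊥ := by
    obtain rfl | rfl | rfl : m = 2 ∨ m = 3 ∨ m = 4 := by omega
    · exact lcs_eq_bot hab (mul_mem_perp_zero hab)
    · exact lcs_eq_bot hab (mul_mem_perp_one hab)
    · exact lcs_eq_bot hab (mul_mem_perp_two hab)
  rw [hbot, finrank_bot] at hdim
  exact absurd hdim (by norm_num)
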